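/- arXiv:2104.11836 — 2 statements merged into one kernel-verified Lean document; each statement's English description precedes it below -/
import Mathlib

section
/- Let R = K[X_1,…,X_n]/J be a standard graded algebra over an infinite field K, let V ⊆ 𝔸(R_1) be an irreducible variety such that V^r is irreducible, and let o = o_1,…,o_i be a word in {c,s} with 0 ≤ i ≤ r. Then there exists a nonempty Zariski open subset U ⊆ V^r such that for every r-tuple l = (l_1,…,l_r) ∈ U and every permutation σ of {1,…,r}, the Hilbert function of I_{σ(l),o} equals the Hilbert function of I_{l,o}; that is, the Hilbert function of I_{l,o} is independent of the order of the linear forms. -/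
/-- Polynomial functions on a `K`-vector space `V`: the subalgebra of `V → K`
generated by the linear functionals. -/
def polyFuns (K V : Type*) [Field K] [AddCommGroup V] [Module K V] : Subalgebra K (V → K) :=
  Algebra.adjoin K {f : V → K | ∃ φ : V →ₗ[K] K, ⇑φ = f}

/-- A subset of (the affine space of) a `K`-vector space is Zariski closed if it is the
common zero locus of a family of polynomial functions. -/
def IsZClosed (K : Type*) {V : Type*} [Field K] [AddCommGroup V] [Module K V]
    (Z : Set V) : Prop :=
  ∃ S : Set (V → K), (∀ f ∈ S, f ∈ polyFuns K V) ∧ Z = {v | ∀ f ∈ S, f v = 0}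

/-- A subset is Zariski open if its complement is Zariski closed. -/
def IsZOpen (K : Type*) {V : Type*} [Field K] [AddCommGroup V] [Module K V]
    (U : Set V) : Prop :=
  IsZClosed K Uᶜ

/-- An irreducible variety: a nonempty Zariski closed set which is not the union of two
proper closed subsets. -/
def IsIrredVariety (K : Type*) {V : Type*} [Field K] [AddCommGroup V] [Module K V]
    (W : Set V) : Prop :=
  IsZClosed K W ∧ W.Nonempty ∧
    ∀ Z₁ Z₂ : Set V, IsZClosed K Z₁ → IsZClosed K Z₂ → W ⊆ Z₁ ∪ Z₂ → (W ⊆ Z₁ ∨ W ⊆ Z₂)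

/-- Auxiliary recursion for `wordIdeal`: letters are booleans, `true` standing for the
letter `c` (colon) and `false` for the letter `s` (sum). The natural number argument keeps
track of which linear form is to be used next (0-indexed). -/
def wordIdealAux {R : Type*} [CommRing R] (l : ℕ → R) : ℕ → Ideal R → List Bool → Ideal R
  | _, I, [] => I
  | j, I, a :: o =>
      wordIdealAux l (j + 1)
        (if a then I.colon (Ideal.span {l j}) else I ⊔ Ideal.span {l j}) o

/-- The ideal `I_{l,o}` attached to a sequence of (linear) forms `l` and a word `o` in the
letters `{c, s}` (here `c = true`, `s = false`): starting from `(0)`, the `j`-th letter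
either colons (`c`) or adds (`s`) the `j`-th form. -/
def wordIdeal {R : Type*} [CommRing R] (l : ℕ → R) (o : List Bool) : Ideal R :=
  wordIdealAux l 0 ⊥ o

/-- The degree `d` component `I ∩ R_d` of an ideal `I`, as a `K`-subspace of `𝒜 d`. -/
def homComp {K R : Type*} [Field K] [CommRing R] [Algebra K R]
    (𝒜 : ℕ → Submodule K R) (I : Ideal R) (d : ℕ) : Submodule K (𝒜 d) :=
  Submodule.comap (𝒜 d).subtype (Submodule.restrictScalars K I)

/-- `dim_K (I)_d`, the dimension of the degree `d` component of the (homogeneous) ideal `I`. -/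
noncomputable def homDim {K R : Type*} [Field K] [CommRing R] [Algebra K R]
    (𝒜 : ℕ → Submodule K R) (I : Ideal R) (d : ℕ) : ℕ :=
  Module.finrank K (homComp 𝒜 I d)

/-- `dim_K (R/I)_d`, the dimension of the degree `d` component of `R/I` for a
(homogeneous) ideal `I`, computed as `dim 𝒜 d / (I ∩ 𝒜 d)`. -/
noncomputable def quotDim {K R : Type*} [Field K] [CommRing R] [Algebra K R]
    (𝒜 : ℕ → Submodule K R) (I : Ideal R) (d : ℕ) : ℕ :=
  Module.finrank K ((𝒜 d) ⧸ homComp 𝒜 I d)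

/-- `macaulayDown c d = c_⟨d⟩`: if `c = C(k_d,d) + … + C(k_1,1)` is the `d`-th Macaulay
representation of `c`, then `c_⟨d⟩ = C(k_d - 1,d) + … + C(k_1 - 1,1)`; computed greedily. -/
def macaulayDown : ℕ → ℕ → ℕ
  | _, 0 => 0
  | c, d + 1 =>
      let k := Nat.findGreatest (fun k => Nat.choose k (d + 1) ≤ c) (c + d + 1)
      Nat.choose (k - 1) (d + 1) + macaulayDown (c - Nat.choose k (d + 1)) d

/-- Property (Gr,d) for the linear forms `l 0, …, l (r-1)` (letters: `true = c`,
`false = s`): for every word `o` of length `i ≤ r`,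
(1) if `m ⊄ I_o` and `i < r` then `l_{i+1} ∉ I_o`;
(2) if `i = r` and `|o|_c < d` then `m ⊆ I_o`;
(3) if `i ≤ r - 2` then `dim (I_{o,c,s})_{d - |o|_c - 1} ≤ dim (I_{o,s,c})_{d - |o|_c - 1}`. -/
def GrProp {K R : Type*} [Field K] [CommRing R] [Algebra K R]
    (𝒜 : ℕ → Submodule K R) [GradedAlgebra 𝒜] (l : ℕ → R) (r d : ℕ) : Prop :=
  ∀ o : List Bool, o.length ≤ r →
    (¬ (HomogeneousIdeal.irrelevant 𝒜).toIdeal ≤ wordIdeal l o → o.length < r →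
        l o.length ∉ wordIdeal l o) ∧
    (o.length = r → o.count true < d →
        (HomogeneousIdeal.irrelevant 𝒜).toIdeal ≤ wordIdeal l o) ∧
    (o.length + 2 ≤ r →
        homDim 𝒜 (wordIdeal l (o ++ [true, false])) (d - o.count true - 1) ≤
          homDim 𝒜 (wordIdeal l (o ++ [false, true])) (d - o.count true - 1))


section Helpers

open MvPolynomial

/-- Polynomials with no monomial in `M`. -/
def stdPart {n : ℕ} (C : Type*) [CommRing C] (M : Set (Fin n →₀ ℕ)) :
    Submodule C (MvPolynomial (Fin n) C) where
  carrier := {x | ∀ e ∈ M, x.coeff e = 0}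
  add_mem' := fun {a b} ha hb e he => by simp [ha e he, hb e he]
  zero_mem' := fun e _ => by simp
  smul_mem' := fun c x hx e he => by simp [hx e he]

lemma mem_stdPart {n : ℕ} {C : Type*} [CommRing C] {M : Set (Fin n →₀ ℕ)}
    {x : MvPolynomial (Fin n) C} : x ∈ stdPart C M ↔ ∀ e ∈ M, x.coeff e = 0 := Iff.rfl

/-- Elements which, up to a power of `f`, lie in the submodule `P`. -/
def satPart {A S : Type*} [CommRing A] [AddCommGroup S] [Module A S] (f : A)
    (P : Submodule A S) : Submodule A S where
  carrier := {x | ∃ N : ℕ, f ^ N • x ∈ P}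
  add_mem' := by
    rintro a b ⟨N, hN⟩ ⟨L, hL⟩
    refine ⟨N + L, ?_⟩
    rw [smul_add]
    refine P.add_mem ?_ ?_
    · rw [add_comm, pow_add, mul_smul]; exact P.smul_mem _ hN
    · rw [pow_add, mul_smul]; exact P.smul_mem _ hL
  zero_mem' := ⟨0, by simp⟩
  smul_mem' := by
    rintro c x ⟨N, hN⟩
    exact ⟨N, by rw [smul_comm]; exact P.smul_mem _ hN⟩

lemma mem_satPart {A S : Type*} [CommRing A] [AddCommGroup S] [Module A S] {f : A}
    {P : Submodule A S} {x : S} : x ∈ satPart f P ↔ ∃ N : ℕ, f ^ N • x ∈ P := Iff.rfl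

/-- Dickson: finitely many elements lie below all elements of `M`. -/
lemma exists_finite_below {n : ℕ} (M : Set (Fin n →₀ ℕ)) :
    ∃ F : Finset (Fin n →₀ ℕ), (∀ e ∈ F, e ∈ M) ∧ ∀ e ∈ M, ∃ e' ∈ F, e' ≤ e := by
  classical
  have hfin : {x | Minimal (· ∈ M) x}.Finite :=
    IsAntichain.finite_of_wellQuasiOrdered (r := (· ≤ ·)) (setOfPred_minimal_antichain _)
      wellQuasiOrdered_le
  refine ⟨hfin.toFinset, ?_, ?_⟩
  · intro e he
    simp only [Set.Finite.mem_toFinset, Set.mem_ofPred_eq] at he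
    exact he.1
  · intro e he
    obtain ⟨m, hm, hmin⟩ := exists_minimal_le_of_wellFoundedLT (· ∈ M) e he
    exact ⟨m, by simpa using hmin, hm⟩

/-- Generic freeness through leading monomials. -/
lemma exists_generic_std {n : ℕ} {A : Type*} [CommRing A] [IsDomain A]
    (I : Ideal (MvPolynomial (Fin n) A)) :
    ∃ (f : A) (M : Set (Fin n →₀ ℕ)), f ≠ 0 ∧
      (∀ x ∈ I, x ∈ stdPart A M → x = 0) ∧
      ∀ x, ∃ N : ℕ, ∃ u ∈ I, ∃ t ∈ stdPart A M, f ^ N • x = u + t := by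
  classical
  let m : MonomialOrder (Fin n) := MonomialOrder.lex
  let M : Set (Fin n →₀ ℕ) := {e | ∃ x ∈ I, x ≠ 0 ∧ m.degree x = e}
  obtain ⟨F, hFM, hF⟩ := exists_finite_below M
  choose! G hGI hG0 hGd using hFM
  let f : A := ∏ e ∈ F, m.leadingCoeff (G e)
  have hf : f ≠ 0 := by
    refine Finset.prod_ne_zero_iff.2 fun e he => ?_
    exact m.leadingCoeff_ne_zero_iff.2 (hG0 e he)
  let P : Submodule A (MvPolynomial (Fin n) A) := I.restrictScalars A ⊔ stdPart A M
  have hPle : P ≤ satPart f P := fun x hx => ⟨0, by simpa using hx⟩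
  have key : ∀ s : m.syn, monomial (m.toSyn.symm s) (1 : A) ∈ satPart f P := by
    intro s
    induction s using WellFoundedLT.induction with
    | ind s ih =>
    by_cases hs : m.toSyn.symm s ∈ M
    · obtain ⟨e, he, hle⟩ := hF _ hs
      obtain ⟨e', he'⟩ := exists_add_of_le hle
      let y := monomial e' (1 : A) * G e
      have hy : y ∈ satPart f P :=
        hPle (Submodule.mem_sup_left (I.mul_mem_left _ (hGI e he)))
      have hy0 : y ≠ 0 := mul_ne_zero (by simp) (hG0 e he)
      have hyd : m.degree y = m.toSyn.symm s := by
        rw [m.degree_mul (by simp) (hG0 e he), m.degree_monomial, hGd e he, he']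
        simp [add_comm]
      have hyc : y.coeff (m.toSyn.symm s) = m.leadingCoeff (G e) := by
        rw [← hyd]
        change m.leadingCoeff y = _
        simp [y]
      have hsum : y = ∑ v ∈ y.support, y.coeff v • monomial v (1 : A) := by
        conv_lhs => rw [y.as_sum]
        refine Finset.sum_congr rfl fun v _ => by simp [smul_monomial]
      have hmem : m.toSyn.symm s ∈ y.support := by
        rw [← hyd]; exact m.degree_mem_support hy0
      rw [← Finset.add_sum_erase _ _ hmem, hyc] at hsum
      have hlow : ∑ v ∈ y.support.erase (m.toSyn.symm s), y.coeff v • monomial v (1 : A)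
          ∈ satPart f P := by
        refine Submodule.sum_mem _ fun v hv => Submodule.smul_mem _ _ ?_
        obtain ⟨hne, hv⟩ := Finset.mem_erase.1 hv
        have h1 := m.le_degree hv
        rw [hyd] at h1
        have h2 := ih (m.toSyn v) (lt_of_le_of_ne (by simpa using h1) (by
          rintro rfl; simp at hne))
        simpa using h2
      have hc : m.leadingCoeff (G e) • monomial (m.toSyn.symm s) (1 : A) ∈ satPart f P := by
        have := Submodule.sub_mem _ hy hlow
        rwa [sub_eq_of_eq_add hsum] at this
      have hfm : f • monomial (m.toSyn.symm s) (1 : A) ∈ satPart f P := by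
        have : f = (∏ e ∈ F.erase e, m.leadingCoeff (G e)) * m.leadingCoeff (G e) :=
          (Finset.prod_erase_mul _ _ he).symm
        rw [this, mul_smul]
        rw [← this]
        exact Submodule.smul_mem _ _ hc
      obtain ⟨N, hN⟩ := hfm
      exact ⟨N + 1, by rw [pow_succ, mul_smul]; exact hN⟩
    · refine hPle (Submodule.mem_sup_right ?_)
      intro e he
      rw [coeff_monomial, if_neg]
      rintro rfl; exact hs he
  refine ⟨f, M, hf, ?_, ?_⟩
  · intro x hx hxs
    by_contra h0
    exact (m.coeff_degree_ne_zero_iff).2 h0 (hxs _ ⟨x, hx, h0, rfl⟩)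
  · intro x
    have hx : x ∈ satPart f P := by
      rw [x.as_sum]
      refine Submodule.sum_mem _ fun v _ => ?_
      have : monomial v (x.coeff v) = x.coeff v • monomial v (1 : A) := by
        simp [smul_monomial]
      rw [this]
      refine Submodule.smul_mem _ _ ?_
      simpa using key (m.toSyn v)
    obtain ⟨N, hN⟩ := hx
    obtain ⟨u, hu, t, ht, h⟩ := Submodule.mem_sup.1 hN
    exact ⟨N, u, hu, t, ht, h.symm⟩

/-- Tor-vanishing at a point. -/
lemma generic_tor {n : ℕ} {A K : Type*} [CommRing A] [Field K]
    (I : Ideal (MvPolynomial (Fin n) A)) (f : A) (M : Set (Fin n →₀ ℕ))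
    (h : ∀ x, ∃ N : ℕ, ∃ u ∈ I, ∃ t ∈ stdPart A M, f ^ N • x = u + t)
    (ev : A →+* K) (x : MvPolynomial (Fin n) A) (hx : MvPolynomial.map ev x = 0) :
    ∃ N : ℕ, ∃ u ∈ RingHom.ker ev • I.restrictScalars A,
      ∃ t ∈ RingHom.ker ev • stdPart A M, f ^ N • x = u + t := by
  have key : x ∈ satPart f (RingHom.ker ev • I.restrictScalars A ⊔
      RingHom.ker ev • stdPart A M) := by
    rw [x.as_sum]
    refine Submodule.sum_mem _ fun v _ => ?_
    have hv : x.coeff v ∈ RingHom.ker ev := by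
      have := congrArg (coeff v) hx
      simpa [coeff_map] using this
    have : monomial v (x.coeff v) = x.coeff v • monomial v (1 : A) := by
      simp [smul_monomial]
    rw [this]
    obtain ⟨N, u, hu, t, ht, e⟩ := h (monomial v (1 : A))
    refine ⟨N, ?_⟩
    rw [smul_comm, e, smul_add]
    exact Submodule.add_mem _ (Submodule.mem_sup_left (Submodule.smul_mem_smul hv hu))
      (Submodule.mem_sup_right (Submodule.smul_mem_smul hv ht))
  obtain ⟨N, hN⟩ := key
  obtain ⟨u, hu, t, ht, e⟩ := Submodule.mem_sup.1 hN
  exact ⟨N, u, hu, t, ht, e.symm⟩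

lemma map_eq_zero_of_mem_smul {n : ℕ} {A K : Type*} [CommRing A] [Field K]
    (ev : A →+* K) (P : Submodule A (MvPolynomial (Fin n) A)) (x) (hx : x ∈ RingHom.ker ev • P) :
    MvPolynomial.map ev x = 0 := by
  refine Submodule.smul_induction_on hx ?_ ?_
  · intro r hr y hy
    have hr' : ev r = 0 := hr
    simp [smul_eq_C_mul, hr']
  · intro a b ha hb
    simp [ha, hb]

lemma smul_mem_self {n : ℕ} {A K : Type*} [CommRing A] [Field K]
    (ev : A →+* K) (P : Submodule A (MvPolynomial (Fin n) A)) (x) (hx : x ∈ RingHom.ker ev • P) :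
    x ∈ P := Submodule.smul_le_right hx

lemma mem_of_unit_pow {n : ℕ} {K : Type*} [Field K] (Q : Submodule K (MvPolynomial (Fin n) K))
    {c : K} (hc : c ≠ 0) {N : ℕ} {x} (h : c ^ N • x ∈ Q) : x ∈ Q := by
  have := Q.smul_mem (c ^ N)⁻¹ h
  rwa [smul_smul, inv_mul_cancel₀ (pow_ne_zero _ hc), one_smul] at this

/-- Colon commutes with generic specialization. -/
lemma generic_colon {n : ℕ} {A K : Type*} [CommRing A] [IsDomain A] [Field K] [Algebra K A]
    (I : Ideal (MvPolynomial (Fin n) A)) (l : MvPolynomial (Fin n) A) :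
    ∃ f : A, f ≠ 0 ∧ ∀ ev : A →ₐ[K] K, ev f ≠ 0 → ∀ h : MvPolynomial (Fin n) K,
      (h ∈ (I.colon (Ideal.span {l})).map (MvPolynomial.map (ev : A →+* K)) ↔
        h * MvPolynomial.map (ev : A →+* K) l ∈ I.map (MvPolynomial.map (ev : A →+* K))) := by
  obtain ⟨f, M, hf, hM, hspan⟩ := exists_generic_std (I ⊔ Ideal.span {l})
  refine ⟨f, hf, fun ev hev h => ?_⟩
  set φ := MvPolynomial.map (σ := Fin n) (ev : A →+* K) with hφ
  have hsec : ∀ z, φ (MvPolynomial.map (algebraMap K A) z) = z := by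
    intro z
    rw [hφ, MvPolynomial.map_map]
    have : (ev : A →+* K).comp (algebraMap K A) = RingHom.id K := by ext; simp
    rw [this, MvPolynomial.map_id]
  have hsurj : Function.Surjective φ := fun z => ⟨_, hsec z⟩
  constructor
  · intro hh
    obtain ⟨H, hH, rfl⟩ := (Ideal.mem_map_iff_of_surjective φ hsurj).1 hh
    rw [← map_mul]
    exact Ideal.mem_map_of_mem _ (Submodule.mem_colon_span_singleton.1 hH)
  · intro hh
    obtain ⟨G, hG, hGe⟩ := (Ideal.mem_map_iff_of_surjective φ hsurj).1 hh
    obtain ⟨H, rfl⟩ := hsurj h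
    obtain ⟨N, u, hu, t, ht, e⟩ := generic_tor _ f M hspan (ev : A →+* K) (H * l - G) (by
      rw [map_sub, ← hφ, hGe, map_mul, sub_self])
    have hx : H * l - G ∈ I ⊔ Ideal.span {l} :=
      Ideal.sub_mem _ (Ideal.mul_mem_left _ _ (Ideal.mem_sup_right
        (Ideal.mem_span_singleton_self l))) (Ideal.mem_sup_left hG)
    have ht0 : t = 0 := by
      refine hM t ?_ (smul_mem_self _ _ _ ht)
      have hu' : u ∈ I ⊔ Ideal.span {l} := smul_mem_self _ _ _ hu
      have : t = f ^ N • (H * l - G) - u := by rw [e]; ring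
      rw [this]
      refine Ideal.sub_mem _ ?_ hu'
      rw [smul_eq_C_mul]
      exact Ideal.mul_mem_left _ _ hx
    have hdec : ∃ v ∈ I, ∃ w, φ w = 0 ∧ u = v + w * l := by
      clear e
      refine Submodule.smul_induction_on hu ?_ ?_
      · intro r hr y hy
        have hr' : ev r = 0 := hr
        obtain ⟨a, ha, b, hb, rfl⟩ := Submodule.mem_sup.1 (show y ∈ I ⊔ Ideal.span {l} from hy)
        obtain ⟨c, rfl⟩ := Ideal.mem_span_singleton'.1 hb
        refine ⟨C r * a, Ideal.mul_mem_left _ _ ha, C r * c, by simp [hφ, hr'], ?_⟩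
        rw [smul_eq_C_mul]; ring
      · intro a b ha hb
        obtain ⟨v, hv, w, hw, rfl⟩ := ha
        obtain ⟨v', hv', w', hw', rfl⟩ := hb
        exact ⟨v + v', I.add_mem hv hv', w + w', by simp [hw, hw'], by ring⟩
    obtain ⟨v, hv, w, hw, rfl⟩ := hdec
    have hmem : f ^ N • H - w ∈ I.colon (Ideal.span {l}) := by
      rw [Submodule.mem_colon_span_singleton]
      have : (f ^ N • H - w) • l = v + C (f ^ N) * G := by
        rw [ht0] at e
        rw [smul_eq_C_mul] at e ⊢
        rw [smul_eq_mul]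
        linear_combination e
      rw [this]
      exact I.add_mem hv (I.mul_mem_left _ hG)
    have h2 := Ideal.mem_map_of_mem φ hmem
    rw [map_sub, hw, sub_zero, smul_eq_C_mul, map_mul] at h2
    refine mem_of_unit_pow (((I.colon (Ideal.span {l})).map φ).restrictScalars K) hev (N := N) ?_
    rw [smul_eq_C_mul]
    simpa [hφ] using h2

/-- Standard monomials specialize to a basis. -/
lemma generic_basis {n : ℕ} {A K : Type*} [CommRing A] [IsDomain A] [Field K] [Algebra K A]
    (I : Ideal (MvPolynomial (Fin n) A)) :
    ∃ (f : A) (M : Set (Fin n →₀ ℕ)), f ≠ 0 ∧ ∀ ev : A →ₐ[K] K, ev f ≠ 0 →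
      (∀ t ∈ stdPart K M, t ∈ I.map (MvPolynomial.map (ev : A →+* K)) → t = 0) ∧
      ∀ y, ∃ u ∈ I.map (MvPolynomial.map (ev : A →+* K)), ∃ t ∈ stdPart K M, y = u + t := by
  obtain ⟨f, M, hf, hM, hspan⟩ := exists_generic_std I
  refine ⟨f, M, hf, fun ev hev => ?_⟩
  set φ := MvPolynomial.map (σ := Fin n) (ev : A →+* K) with hφ
  have hsec : ∀ z, φ (MvPolynomial.map (algebraMap K A) z) = z := by
    intro z
    rw [hφ, MvPolynomial.map_map]
    have : (ev : A →+* K).comp (algebraMap K A) = RingHom.id K := by ext; simp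
    rw [this, MvPolynomial.map_id]
  have hsurj : Function.Surjective φ := fun z => ⟨_, hsec z⟩
  have hstd : ∀ t ∈ stdPart A M, φ t ∈ stdPart K M := by
    intro t ht e he
    simp [hφ, coeff_map, ht e he]
  have hφs : ∀ (N : ℕ) x, φ (f ^ N • x) = (ev f) ^ N • φ x := by
    intro N x
    rw [smul_eq_C_mul, smul_eq_C_mul, map_mul]
    simp [hφ]
  constructor
  · intro t ht htI
    obtain ⟨G, hG, hGe⟩ := (Ideal.mem_map_iff_of_surjective φ hsurj).1 htI
    set T := MvPolynomial.map (algebraMap K A) t with hT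
    have hTs : T ∈ stdPart A M := by
      intro e he
      simp [hT, coeff_map, ht e he]
    obtain ⟨N, u, hu, s, hs, e⟩ := generic_tor _ f M hspan (ev : A →+* K) (G - T) (by
      rw [map_sub, ← hφ, hGe, hsec, sub_self])
    have h0 : f ^ N • T + s = 0 := by
      refine hM _ ?_ (Submodule.add_mem _ (Submodule.smul_mem _ _ hTs) (smul_mem_self _ _ _ hs))
      have : f ^ N • T + s = C (f ^ N) * G - u := by
        rw [smul_eq_C_mul] at e ⊢
        linear_combination -e
      rw [this]
      exact I.sub_mem (I.mul_mem_left _ hG) (smul_mem_self _ _ _ hu)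
    have h1 := congrArg φ h0
    rw [map_add, hφs, map_eq_zero_of_mem_smul _ _ _ hs, hsec] at h1
    simpa [pow_ne_zero _ hev, smul_eq_zero, hev] using h1
  · intro y
    obtain ⟨N, u, hu, t, ht, e⟩ := hspan (MvPolynomial.map (algebraMap K A) y)
    have h1 := congrArg φ e
    rw [map_add, hφs, hsec] at h1
    refine ⟨C ((ev f ^ N)⁻¹) * φ u, Ideal.mul_mem_left _ _ (Ideal.mem_map_of_mem _ hu),
      (ev f ^ N)⁻¹ • φ t, Submodule.smul_mem _ _ (hstd _ ht), ?_⟩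
    rw [← smul_eq_C_mul, ← smul_add, ← h1, smul_smul, inv_mul_cancel₀ (pow_ne_zero _ hev),
      one_smul]

/-- Word ideals commute with generic specialization. -/
lemma generic_word {n : ℕ} {A K R X : Type*} [CommRing A] [IsDomain A] [Field K] [Algebra K A]
    [CommRing R] [Algebra K R] (g : MvPolynomial (Fin n) K →ₐ[K] R) (hg : Function.Surjective g)
    (ev : X → A →ₐ[K] K) (L : ℕ → MvPolynomial (Fin n) A) (l : X → ℕ → R)
    (hl : ∀ x j, g (MvPolynomial.map (ev x : A →+* K) (L j)) = l x j) (o : List Bool) :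
    ∀ (j : ℕ) (J : X → Ideal R) (I : Ideal (MvPolynomial (Fin n) A)) (f : A), f ≠ 0 →
      (∀ x, ev x f ≠ 0 → ∀ h, g h ∈ J x ↔ h ∈ I.map (MvPolynomial.map (ev x : A →+* K))) →
      ∃ (I' : Ideal (MvPolynomial (Fin n) A)) (f' : A), f' ≠ 0 ∧
        ∀ x, ev x f' ≠ 0 → ∀ h, g h ∈ wordIdealAux (l x) j (J x) o ↔
          h ∈ I'.map (MvPolynomial.map (ev x : A →+* K)) := by
  induction o with
  | nil => intro j J I f hf h; exact ⟨I, f, hf, h⟩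
  | cons a o ih =>
    intro j J I f hf h
    cases a with
    | true =>
      obtain ⟨f₁, hf₁, h₁⟩ := generic_colon (K := K) I (L j)
      refine ih (j + 1) (fun x => (J x).colon (Ideal.span {l x j})) (I.colon (Ideal.span {L j}))
        (f * f₁) (mul_ne_zero hf hf₁) ?_
      intro x hx y
      rw [map_mul] at hx
      rw [h₁ (ev x) (right_ne_zero_of_mul hx), ← h x (left_ne_zero_of_mul hx),
        Submodule.mem_colon_span_singleton, map_mul, hl, smul_eq_mul]
    | false =>
      refine ih (j + 1) (fun x => J x ⊔ Ideal.span {l x j}) (I ⊔ Ideal.span {L j}) f hf ?_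
      intro x hx y
      rw [Ideal.map_sup, Ideal.map_span, Set.image_singleton]
      constructor
      · intro hy
        obtain ⟨a, ha, b, hb, e⟩ := Submodule.mem_sup.1 hy
        obtain ⟨c, rfl⟩ := Ideal.mem_span_singleton'.1 hb
        obtain ⟨c, rfl⟩ := hg c
        have h1 : y - c * MvPolynomial.map (ev x : A →+* K) (L j) ∈
            I.map (MvPolynomial.map (ev x : A →+* K)) := by
          rw [← h x hx, map_sub, map_mul, hl, ← e, add_sub_cancel_right]
          exact ha
        have h2 := Ideal.add_mem _ (Ideal.mem_sup_left h1) (Ideal.mem_sup_right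
          (Ideal.mul_mem_left _ c (Ideal.mem_span_singleton_self
            (MvPolynomial.map (ev x : A →+* K) (L j)))))
        rwa [sub_add_cancel] at h2
      · intro hy
        obtain ⟨a, ha, b, hb, rfl⟩ := Submodule.mem_sup.1 hy
        obtain ⟨c, rfl⟩ := Ideal.mem_span_singleton'.1 hb
        rw [map_add, map_mul, hl]
        exact Ideal.add_mem _ (Ideal.mem_sup_left ((h x hx a).2 ha)) (Ideal.mem_sup_right
          (Ideal.mul_mem_left _ _ (Ideal.mem_span_singleton_self _)))

lemma homog_colon {K R : Type*} [Field K] [CommRing R] [Algebra K R]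
    (𝒜 : ℕ → Submodule K R) [GradedAlgebra 𝒜] (I : Ideal R) (hI : I.IsHomogeneous 𝒜)
    (l : R) (hl : l ∈ 𝒜 1) : (I.colon (Ideal.span {l})).IsHomogeneous 𝒜 := by
  intro i r hr
  rw [Submodule.mem_colon_span_singleton, smul_eq_mul] at hr ⊢
  have h := hI (i + 1) hr
  rwa [DirectSum.coe_decompose_mul_add_of_right_mem 𝒜 hl] at h

lemma homog_word {K R : Type*} [Field K] [CommRing R] [Algebra K R]
    (𝒜 : ℕ → Submodule K R) [GradedAlgebra 𝒜] (l : ℕ → R) (hl : ∀ j, l j ∈ 𝒜 1) (o : List Bool) :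
    ∀ (j : ℕ) (I : Ideal R), I.IsHomogeneous 𝒜 → (wordIdealAux l j I o).IsHomogeneous 𝒜 := by
  induction o with
  | nil => intro j I hI; exact hI
  | cons a o ih =>
    intro j I hI
    cases a with
    | true => exact ih _ _ (homog_colon 𝒜 I hI _ (hl j))
    | false =>
      refine ih _ _ (hI.sup (Ideal.homogeneous_span 𝒜 _ ?_))
      intro x hx
      rw [Set.mem_singleton_iff] at hx
      exact ⟨1, hx ▸ hl j⟩

lemma g_monomial {K R : Type*} [Field K] [CommRing R] [Algebra K R]
    (𝒜 : ℕ → Submodule K R) [GradedAlgebra 𝒜] {n : ℕ} (g : MvPolynomial (Fin n) K →ₐ[K] R)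
    (hgX : ∀ i, g (MvPolynomial.X i) ∈ 𝒜 1) (e : Fin n →₀ ℕ) (c : K) :
    g (monomial e c) ∈ 𝒜 e.degree := by
  have h1 : monomial e c = c • monomial e (1 : K) := by simp [smul_monomial]
  rw [h1, map_smul]
  refine Submodule.smul_mem _ _ ?_
  clear h1
  induction e using Finsupp.induction_linear with
  | zero => simpa using SetLike.GradedOne.one_mem (A := 𝒜)
  | add a b ha hb =>
    have : monomial (a + b) (1 : K) = monomial a 1 * monomial b 1 := by simp [monomial_mul]
    rw [this, map_mul, map_add]
    exact SetLike.GradedMul.mul_mem ha hb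
  | single i k =>
    have : monomial (Finsupp.single i k) (1 : K) = X i ^ k := by rw [X_pow_eq_monomial]
    rw [this, map_pow, Finsupp.degree_single]
    simpa using SetLike.pow_mem_graded k (hgX i)

lemma fin_graded {K R : Type*} [Field K] [CommRing R] [Algebra K R]
    (𝒜 : ℕ → Submodule K R) (h0 : 𝒜 0 = (1 : Submodule K R))
    (hstd : ∀ n, 𝒜 (n + 1) = 𝒜 1 * 𝒜 n) [FiniteDimensional K (𝒜 1)] (d : ℕ) :
    FiniteDimensional K (𝒜 d) := by
  have h : (𝒜 d).FG := by
    induction d with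
    | zero => 
      rw [h0, Submodule.one_eq_span]
      exact Submodule.fg_span_singleton _
    | succ d ih =>
      rw [hstd]
      exact Submodule.FG.mul (Module.Finite.iff_fg.1 inferInstance) ih
  exact Module.Finite.iff_fg.2 h

/-- The Hilbert function is determined by the standard monomials. -/
lemma homDim_std {K R : Type*} [Field K] [CommRing R] [Algebra K R]
    (𝒜 : ℕ → Submodule K R) [GradedAlgebra 𝒜] {n : ℕ} (g : MvPolynomial (Fin n) K →ₐ[K] R)
    (hg : Function.Surjective g)
    (hgX : ∀ i, g (MvPolynomial.X i) ∈ 𝒜 1) (M : Set (Fin n →₀ ℕ)) (d : ℕ)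
    [FiniteDimensional K (𝒜 d)]
    (I : Ideal R) (hI : I.IsHomogeneous 𝒜)
    (h1 : ∀ t ∈ stdPart K M, g t ∈ I → t = 0)
    (h2 : ∀ y, ∃ u, g u ∈ I ∧ ∃ t ∈ stdPart K M, y = u + t) :
    homDim 𝒜 I d = Module.finrank K (𝒜 d) - Module.finrank K
      (((stdPart K (M ∪ {e | e.degree ≠ d})).map g.toLinearMap).comap (𝒜 d).subtype) := by
  have hc : IsCompl (homComp 𝒜 I d)
      (((stdPart K (M ∪ {e | e.degree ≠ d})).map g.toLinearMap).comap (𝒜 d).subtype) := by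
    constructor
    · rw [Submodule.disjoint_def]
      rintro ⟨x, hx⟩ hxI ⟨t, ht, hte⟩
      have hxI' : x ∈ I := hxI
      have hte' : g t = x := hte
      have := h1 t (fun e he => ht e (Or.inl he)) (hte' ▸ hxI')
      subst this
      ext
      simpa using hte'.symm
    · rw [codisjoint_iff, eq_top_iff]
      rintro ⟨x, hx⟩ -
      obtain ⟨y, rfl⟩ := hg x
      obtain ⟨u, hu, t, ht, rfl⟩ := h2 y
      have hproj : (DirectSum.decompose 𝒜 (g t) d : R) = g (homogeneousComponent d t) := by
        have hh : ∀ p : MvPolynomial (Fin n) K,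
            (DirectSum.decompose 𝒜 (g p) d : R) = g (homogeneousComponent d p) := by
          intro p
          induction p using MvPolynomial.induction_on' with
          | monomial e c =>
            by_cases he : e.degree = d
            · subst he
              rw [DirectSum.decompose_of_mem_same 𝒜 (g_monomial 𝒜 g hgX e c)]
              congr 1
              rw [homogeneousComponent_of_mem (isHomogeneous_monomial c rfl), if_pos rfl]
            · rw [DirectSum.decompose_of_mem_ne 𝒜 (g_monomial 𝒜 g hgX e c) he]
              rw [homogeneousComponent_of_mem (isHomogeneous_monomial c rfl), if_neg (Ne.symm he),
                map_zero]
          | add p q hp hq =>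
            simp only [map_add, DirectSum.decompose_add, DirectSum.add_apply,
              Submodule.coe_add, hp, hq]
        exact hh t
      have hsum : g (u + t) = DirectSum.decompose 𝒜 (g u) d + DirectSum.decompose 𝒜 (g t) d := by
        conv_lhs => rw [← DirectSum.decompose_of_mem_same 𝒜 hx]
        rw [map_add, DirectSum.decompose_add, DirectSum.add_apply, Submodule.coe_add]
      have : (⟨g (u + t), hx⟩ : 𝒜 d) =
          DirectSum.decompose 𝒜 (g u) d + DirectSum.decompose 𝒜 (g t) d := by
        ext; exact hsum
      rw [this]
      refine Submodule.add_mem_sup ?_ ?_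
      · exact hI d hu
      · refine ⟨homogeneousComponent d t, ?_, hproj.symm⟩
        intro e he
        rw [coeff_homogeneousComponent]
        split_ifs with hd
        · rcases he with he | he
          · exact ht e he
          · exact absurd hd he
        · rfl
  have := Submodule.finrank_add_eq_of_isCompl hc
  unfold homDim
  omega


/-- Restriction of functions to a subset. -/
def restrictHom (K : Type*) {E : Type*} [Field K] (Z : Set E) : (E → K) →ₐ[K] (Z → K) :=
  AlgHom.pi (fun z : Z => Pi.evalAlgHom K (fun _ : E => K) z.1)

/-- Restrictions of polynomial functions to a subset. -/
def coordRing (K : Type*) {E : Type*} [Field K] [AddCommGroup E] [Module K E] (Z : Set E) :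
    Subalgebra K (Z → K) :=
  (polyFuns K E).map (restrictHom K Z)

/-- Evaluation of elements of the coordinate ring at a point. -/
def coordEval (K : Type*) {E : Type*} [Field K] [AddCommGroup E] [Module K E] (Z : Set E)
    (z : Z) : coordRing K Z →ₐ[K] K :=
  (Pi.evalAlgHom K (fun _ : Z => K) z).comp (coordRing K Z).val

/-- The class of a polynomial function in the coordinate ring. -/
def coordOf {K : Type*} {E : Type*} [Field K] [AddCommGroup E] [Module K E] (Z : Set E)
    (F : E → K) (hF : F ∈ polyFuns K E) : coordRing K Z :=
  ⟨restrictHom K Z F, F, hF, rfl⟩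

lemma coordEval_coordOf {K : Type*} {E : Type*} [Field K] [AddCommGroup E] [Module K E]
    (Z : Set E) (F : E → K) (hF : F ∈ polyFuns K E) (z : Z) :
    coordEval K Z z (coordOf Z F hF) = F z.1 := rfl

lemma exists_coordOf {K : Type*} {E : Type*} [Field K] [AddCommGroup E] [Module K E]
    (Z : Set E) (a : coordRing K Z) : ∃ F hF, a = coordOf Z F hF := by
  obtain ⟨a, F, hF, rfl⟩ := a
  exact ⟨F, hF, rfl⟩

lemma coordOf_eq_zero {K : Type*} {E : Type*} [Field K] [AddCommGroup E] [Module K E]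
    {Z : Set E} {F : E → K} {hF : F ∈ polyFuns K E} :
    coordOf Z F hF = 0 ↔ ∀ z ∈ Z, F z = 0 := by
  constructor
  · intro h z hz
    have := congrArg (coordEval K Z ⟨z, hz⟩) h
    rwa [coordEval_coordOf, map_zero] at this
  · intro h
    apply Subtype.ext
    funext z
    exact h z.1 z.2

lemma isZClosed_zero {K : Type*} {E : Type*} [Field K] [AddCommGroup E] [Module K E]
    (F : E → K) (hF : F ∈ polyFuns K E) : IsZClosed K {v | F v = 0} :=
  ⟨{F}, by simpa using hF, by simp⟩

lemma coordRing_isDomain {K : Type*} {E : Type*} [Field K] [AddCommGroup E] [Module K E]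
    {Z : Set E} (hZ : IsIrredVariety K Z) : IsDomain (coordRing K Z) := by
  obtain ⟨-, ⟨z, hz⟩, hirr⟩ := hZ
  have : Nontrivial (coordRing K Z) :=
    ⟨0, 1, fun h => by simpa using congrArg (coordEval K Z ⟨z, hz⟩) h⟩
  have : NoZeroDivisors (coordRing K Z) := by
    refine ⟨fun {a b} hab => ?_⟩
    obtain ⟨F, hF, rfl⟩ := exists_coordOf Z a
    obtain ⟨G, hG, rfl⟩ := exists_coordOf Z b
    rw [coordOf_eq_zero, coordOf_eq_zero]
    refine hirr _ _ (isZClosed_zero F hF) (isZClosed_zero G hG) ?_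
    intro v hv
    have := congrArg (coordEval K Z ⟨v, hv⟩) hab
    rw [map_mul, map_zero, coordEval_coordOf, coordEval_coordOf] at this
    exact mul_eq_zero.1 this
  exact NoZeroDivisors.to_isDomain _

lemma polyFuns_linear {K : Type*} {E : Type*} [Field K] [AddCommGroup E] [Module K E]
    (φ : E →ₗ[K] K) : ⇑φ ∈ polyFuns K E := Algebra.subset_adjoin ⟨φ, rfl⟩

lemma polyFuns_comp {K : Type*} {E : Type*} [Field K] [AddCommGroup E] [Module K E]
    (T : E →ₗ[K] E) (F : E → K) (hF : F ∈ polyFuns K E) : (fun x => F (T x)) ∈ polyFuns K E := by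
  unfold polyFuns at hF
  induction hF using Algebra.adjoin_induction with
  | mem x hx => obtain ⟨φ, rfl⟩ := hx; exact polyFuns_linear (φ.comp T)
  | algebraMap c => exact (polyFuns K E).algebraMap_mem c
  | add x y _ _ hx hy => exact (polyFuns K E).add_mem hx hy
  | mul x y _ _ hx hy => exact (polyFuns K E).mul_mem hx hy

/-- The Hilbert function is constant on a nonempty open subset. -/
lemma exists_generic_const {K R : Type*} [Field K] [CommRing R] [Algebra K R]
    (𝒜 : ℕ → Submodule K R) [GradedAlgebra 𝒜]
    (h0 : 𝒜 0 = (1 : Submodule K R)) (hstd : ∀ n, 𝒜 (n + 1) = 𝒜 1 * 𝒜 n)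
    [FiniteDimensional K (𝒜 1)]
    (n : ℕ) (g : MvPolynomial (Fin n) K →ₐ[K] R) (hg : Function.Surjective g)
    (hgX : ∀ i, g (MvPolynomial.X i) ∈ 𝒜 1)
    (r : ℕ) (Z : Set (Fin r → 𝒜 1)) (hZ : IsIrredVariety K Z) (o : List Bool) :
    ∃ F ∈ polyFuns K (Fin r → 𝒜 1), (¬ ∀ z ∈ Z, F z = 0) ∧ ∃ H : ℕ → ℕ, ∀ z ∈ Z, F z ≠ 0 →
      ∀ d, homDim 𝒜 (wordIdeal (fun t => if h : t < r then (z ⟨t, h⟩ : R) else 0) o) d = H d := by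
  have := coordRing_isDomain hZ
  let b := Module.finBasis K (𝒜 1)
  choose s hs using fun k => hg (b k : R)
  let c : Fin r → Fin (Module.finrank K (𝒜 1)) → coordRing K Z := fun t k =>
    coordOf Z (⇑((b.coord k).comp (LinearMap.proj t : (Fin r → 𝒜 1) →ₗ[K] 𝒜 1)))
      (polyFuns_linear _)
  let L : ℕ → MvPolynomial (Fin n) (coordRing K Z) := fun t =>
    if h : t < r then ∑ k, C (c ⟨t, h⟩ k) * MvPolynomial.map (algebraMap K (coordRing K Z)) (s k)
    else 0
  let l : Z → ℕ → R := fun z t => if h : t < r then (z.1 ⟨t, h⟩ : R) else 0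
  have hsec : ∀ (x : Z) y, MvPolynomial.map (coordEval K Z x : coordRing K Z →+* K)
      (MvPolynomial.map (algebraMap K (coordRing K Z)) y) = (y : MvPolynomial (Fin n) K) := by
    intro x y
    rw [MvPolynomial.map_map]
    have : (coordEval K Z x : coordRing K Z →+* K).comp (algebraMap K (coordRing K Z)) =
        RingHom.id K := by
      ext a; exact (coordEval K Z x).commutes a
    rw [this, MvPolynomial.map_id]
  have hl : ∀ x j, g (MvPolynomial.map (coordEval K Z x : coordRing K Z →+* K) (L j)) = l x j := by
    intro x j
    by_cases hj : j < r
    · simp only [L, l, dif_pos hj, map_sum, map_mul, hsec, hs, map_C]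
      have hb := b.sum_repr (x.1 ⟨j, hj⟩)
      conv_rhs => rw [← hb]
      rw [Submodule.coe_sum]
      refine Finset.sum_congr rfl fun k _ => ?_
      rw [Submodule.coe_smul, Algebra.smul_def]
      congr 1
      exact g.commutes _
    · simp [L, l, hj]
  obtain ⟨I, f₁, hf₁, h₁⟩ := generic_word g hg (coordEval K Z) L l hl o 0 (fun _ => ⊥)
    ((RingHom.ker g).map (MvPolynomial.map (algebraMap K (coordRing K Z)))) 1 one_ne_zero (by
      intro x _ y
      rw [Ideal.map_map]
      have : (MvPolynomial.map (coordEval K Z x : coordRing K Z →+* K)).comp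
          (MvPolynomial.map (algebraMap K (coordRing K Z))) =
          RingHom.id (MvPolynomial (Fin n) K) := RingHom.ext (hsec x)
      rw [this, Ideal.map_id]
      exact Iff.rfl)
  obtain ⟨f₂, M, hf₂, h₂⟩ := generic_basis (K := K) I
  obtain ⟨F, hF, hFe⟩ := exists_coordOf Z (f₁ * f₂)
  refine ⟨F, hF, ?_, fun d => Module.finrank K (𝒜 d) - Module.finrank K
      (((stdPart K (M ∪ {e | e.degree ≠ d})).map g.toLinearMap).comap (𝒜 d).subtype), ?_⟩
  · rw [← coordOf_eq_zero (hF := hF), ← hFe]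
    exact mul_ne_zero hf₁ hf₂
  · intro z hz hFz d
    have hne : coordEval K Z ⟨z, hz⟩ (f₁ * f₂) ≠ 0 := by
      rw [hFe]; exact hFz
    rw [map_mul] at hne
    have hw := h₁ ⟨z, hz⟩ (left_ne_zero_of_mul hne)
    obtain ⟨ha, hb⟩ := h₂ (coordEval K Z ⟨z, hz⟩) (right_ne_zero_of_mul hne)
    have := fin_graded 𝒜 h0 hstd d
    refine homDim_std 𝒜 g hg hgX M d _ ?_ ?_ ?_
    · refine homog_word 𝒜 _ ?_ o 0 ⊥ (Ideal.IsHomogeneous.bot 𝒜)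
      intro j
      split_ifs
      · exact Subtype.mem _
      · exact Submodule.zero_mem _
    · intro t ht hgt
      exact ha t ht ((hw t).1 hgt)
    · intro y
      obtain ⟨u, hu, t, ht, e⟩ := hb y
      exact ⟨u, (hw u).2 hu, t, ht, e⟩

end Helpers

/-- **Corollary (order independence).** Let `R = K[X_1,…,X_n]/J` be a standard graded
algebra over an infinite field `K` (presented by a graded surjection `g`), let
`V ⊆ 𝔸(R_1)` be an irreducible variety with `V^r` irreducible, and let `o` be a word in
`{c,s}` of length `≤ r`.  Then there is a nonempty Zariski open subset `U` of `V^r`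
such that for every tuple in `U` and every permutation `σ` of the `r` forms the
Hilbert function of `I_{σ(l),o}` equals that of `I_{l,o}`. -/
theorem cor_order_independence
    {K R : Type*} [Field K] [Infinite K] [CommRing R] [Algebra K R]
    (𝒜 : ℕ → Submodule K R) [GradedAlgebra 𝒜]
    (h0 : 𝒜 0 = (1 : Submodule K R)) (hstd : ∀ n, 𝒜 (n + 1) = 𝒜 1 * 𝒜 n)
    [FiniteDimensional K (𝒜 1)]
    (n : ℕ) (g : MvPolynomial (Fin n) K →ₐ[K] R) (hg : Function.Surjective g)
    (hgX : ∀ i, g (MvPolynomial.X i) ∈ 𝒜 1)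
    (V : Set (𝒜 1)) (hV : IsIrredVariety K V)
    (r : ℕ) (hVr : IsIrredVariety K {x : Fin r → 𝒜 1 | ∀ t, x t ∈ V})
    (o : List Bool) (ho : o.length ≤ r) :
    ∃ U : Set (Fin r → 𝒜 1),
      (∃ W : Set (Fin r → 𝒜 1), IsZOpen K W ∧ U = {x | ∀ t, x t ∈ V} ∩ W) ∧
      U.Nonempty ∧
      ∀ x ∈ U, ∀ σ : Equiv.Perm (Fin r), ∀ j : ℕ,
        homDim 𝒜 (wordIdeal (fun t => if h : t < r then (x (σ ⟨t, h⟩) : R) else 0) o) j =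
          homDim 𝒜 (wordIdeal (fun t => if h : t < r then (x ⟨t, h⟩ : R) else 0) o) j := by
  classical
  obtain ⟨F, hF, hne, H, hH⟩ := exists_generic_const 𝒜 h0 hstd n g hg hgX r _ hVr o
  have hdom := coordRing_isDomain hVr
  let T : Equiv.Perm (Fin r) → (Fin r → 𝒜 1) →ₗ[K] (Fin r → 𝒜 1) :=
    fun σ => LinearMap.funLeft K (𝒜 1) σ
  let Fσ : Equiv.Perm (Fin r) → (Fin r → 𝒜 1) → K := fun σ x => F (T σ x)
  have hFσ : ∀ σ, Fσ σ ∈ polyFuns K (Fin r → 𝒜 1) := fun σ => polyFuns_comp (T σ) F hF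
  have hprod : (∏ σ, Fσ σ) ∈ polyFuns K (Fin r → 𝒜 1) :=
    Subalgebra.prod_mem _ fun σ _ => hFσ σ
  have hnz : ∀ x, (∏ σ, Fσ σ) x ≠ 0 → ∀ σ : Equiv.Perm (Fin r), F (fun t => x (σ t)) ≠ 0 := by
    intro x hx σ
    rw [Finset.prod_apply] at hx
    exact Finset.prod_ne_zero_iff.1 hx σ (Finset.mem_univ σ)
  refine ⟨{x | ∀ t, x t ∈ V} ∩ {x | (∏ σ, Fσ σ) x ≠ 0}, ⟨_, ?_, rfl⟩, ?_, ?_⟩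
  · have : {x | (∏ σ, Fσ σ) x ≠ 0}ᶜ = {x | (∏ σ, Fσ σ) x = 0} := by ext x; simp
    unfold IsZOpen
    rw [this]
    exact isZClosed_zero _ hprod
  · have hp : (∏ σ, coordOf {x : Fin r → 𝒜 1 | ∀ t, x t ∈ V} (Fσ σ) (hFσ σ)) ≠ 0 := by
      refine Finset.prod_ne_zero_iff.2 fun σ _ h => hne ?_
      rw [coordOf_eq_zero] at h
      intro z hz
      have h1 := h (fun t => z (σ.symm t)) (fun t => hz _)
      have h2 : T σ (fun t => z (σ.symm t)) = z := by
        funext t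
        simp [T, LinearMap.funLeft_apply]
      simpa only [Fσ, h2] using h1
    by_contra hemp
    rw [Set.not_nonempty_iff_eq_empty] at hemp
    apply hp
    apply Subtype.ext
    funext z
    by_contra hz
    have hz' : (∏ σ, Fσ σ) z.1 ≠ 0 := by
      intro h
      apply hz
      have : coordEval K _ z (∏ σ, coordOf _ (Fσ σ) (hFσ σ)) = 0 := by
        rw [map_prod]
        rw [Finset.prod_apply] at h
        exact h
      exact this
    have : z.1 ∈ ({x | ∀ t, x t ∈ V} ∩ {x | (∏ σ, Fσ σ) x ≠ 0} : Set (Fin r → 𝒜 1)) :=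
      ⟨z.2, hz'⟩
    rw [hemp] at this
    exact this
  · rintro x ⟨hxV, hx⟩ σ j
    have h1 := hH (fun t => x (σ t)) (fun t => hxV _) (hnz x hx σ) j
    have h2 := hH x hxV (hnz x hx 1) j
    rw [h2]
    exact h1
end

section
/- Let R be a standard graded algebra over an infinite field K with n = dim_K R_1, let d > 0 be a degree, and let r ≥ d + n − 1. Then r general linear forms of R satisfy property (Gr,d); that is, there exists a nonempty Zariski open subset U ⊆ 𝔸(R_1)^r such that every r-tuple (l_1,…,l_r) ∈ U satisfies (Gr,d). -/
section GenericHelpers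

theorem polyFuns_comp_affine {K V V' : Type*} [Field K] [AddCommGroup V] [Module K V]
    [AddCommGroup V'] [Module K V'] (a : V) (L : V' →ₗ[K] V) {f : V → K}
    (hf : f ∈ polyFuns K V) : (fun y => f (a + L y)) ∈ polyFuns K V' := by
  unfold polyFuns at hf
  induction hf using Algebra.adjoin_induction with
  | mem f hf =>
    obtain ⟨φ, rfl⟩ := hf
    have h1 : (fun y => φ (a + L y)) = algebraMap K (V' → K) (φ a) + ⇑(φ ∘ₗ L) := by
      funext y; simp
    rw [h1]
    exact add_mem (Subalgebra.algebraMap_mem _ _) (Algebra.subset_adjoin ⟨_, rfl⟩)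
  | algebraMap c => exact Subalgebra.algebraMap_mem (polyFuns K V') c
  | add f g _ _ hf hg => exact add_mem hf hg
  | mul f g _ _ hf hg => exact mul_mem hf hg

theorem polyFuns_line {K V : Type*} [Field K] [AddCommGroup V] [Module K V] (a b : V)
    {f : V → K} (hf : f ∈ polyFuns K V) :
    ∃ p : Polynomial K, ∀ t : K, p.eval t = f (a + t • b) := by
  unfold polyFuns at hf
  induction hf using Algebra.adjoin_induction with
  | mem f hf =>
    obtain ⟨φ, rfl⟩ := hf
    exact ⟨Polynomial.C (φ a) + Polynomial.X * Polynomial.C (φ b), fun t => by simp; ring⟩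
  | algebraMap c => exact ⟨Polynomial.C c, fun t => by simp⟩
  | add f g _ _ hf hg =>
    obtain ⟨p, hp⟩ := hf
    obtain ⟨q, hq⟩ := hg
    exact ⟨p + q, fun t => by simp [hp, hq]⟩
  | mul f g _ _ hf hg =>
    obtain ⟨p, hp⟩ := hf
    obtain ⟨q, hq⟩ := hg
    exact ⟨p * q, fun t => by simp [hp, hq]⟩

/-- A property holding on a nonempty basic Zariski open subset. -/
def Gen (K : Type*) {V : Type*} [Field K] [AddCommGroup V] [Module K V] (P : V → Prop) : Prop :=
  ∃ f ∈ polyFuns K V, (∃ x, f x ≠ 0) ∧ ∀ x, f x ≠ 0 → P x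

variable {K V : Type*} [Field K] [AddCommGroup V] [Module K V]

theorem Gen.mono {P Q : V → Prop} (h : Gen K P) (hPQ : ∀ x, P x → Q x) : Gen K Q := by
  obtain ⟨f, hf, hx, h⟩ := h
  exact ⟨f, hf, hx, fun x hx => hPQ x (h x hx)⟩

theorem Gen.of_forall {P : V → Prop} (h : ∀ x, P x) : Gen K P :=
  ⟨1, one_mem _, ⟨0, by simp⟩, fun x _ => h x⟩

theorem Gen.and [Infinite K] {P Q : V → Prop} (hP : Gen K P) (hQ : Gen K Q) :
    Gen K (fun x => P x ∧ Q x) := by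
  obtain ⟨f, hf, ⟨a, ha⟩, hP⟩ := hP
  obtain ⟨g, hg, ⟨b, hb⟩, hQ⟩ := hQ
  refine ⟨f * g, mul_mem hf hg, ?_, fun x hx => ?_⟩
  · obtain ⟨p, hp⟩ := polyFuns_line a (b - a) hf
    obtain ⟨q, hq⟩ := polyFuns_line a (b - a) hg
    have hp0 : p ≠ 0 := by
      rintro rfl
      have := hp 0
      simp at this
      exact ha this.symm
    have hq0 : q ≠ 0 := by
      rintro rfl
      have := hq 1
      simp at this
      exact hb this.symm
    by_contra! hcon
    apply mul_ne_zero hp0 hq0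
    apply Polynomial.funext
    intro t
    have := hcon (a + t • (b - a))
    simpa [hp, hq] using this
  · have : f x * g x ≠ 0 := hx
    exact ⟨hP x (left_ne_zero_of_mul this), hQ x (right_ne_zero_of_mul this)⟩

theorem Gen.exists {P : V → Prop} (h : Gen K P) : ∃ x, P x := by
  obtain ⟨f, hf, ⟨x, hx⟩, h⟩ := h
  exact ⟨x, h x hx⟩

theorem Gen.comp_surj {V' : Type*} [AddCommGroup V'] [Module K V'] {P : V → Prop}
    (h : Gen K P) (L : V' →ₗ[K] V) (hs : Function.Surjective L) :
    Gen K (fun y => P (L y)) := by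
  obtain ⟨f, hf, ⟨x, hx⟩, h⟩ := h
  obtain ⟨y, rfl⟩ := hs x
  have := polyFuns_comp_affine 0 L hf
  simp only [zero_add] at this
  exact ⟨_, this, ⟨y, hx⟩, fun y hy => h _ hy⟩

theorem Gen.exists_translate {V' : Type*} [AddCommGroup V'] [Module K V'] {P : V → Prop}
    (h : Gen K P) (L : V' →ₗ[K] V) : ∃ x, Gen K (fun y => P (x + L y)) := by
  obtain ⟨f, hf, ⟨x, hx⟩, h⟩ := h
  exact ⟨x, _, polyFuns_comp_affine x L hf, ⟨0, by simpa using hx⟩, fun y hy => h _ hy⟩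

/-- A translated vector generically avoids a proper subspace. -/
theorem Gen.not_mem (S : Submodule K V) (hS : S ≠ ⊤) (a : V) : Gen K (fun y => a + y ∉ S) := by
  obtain ⟨φ, hφ, hS⟩ := S.exists_le_ker_of_lt_top (lt_top_iff_ne_top.2 hS)
  refine ⟨fun y => φ (a + y), ?_, ?_, fun y hy hm => hy (hS hm)⟩
  · exact polyFuns_comp_affine a LinearMap.id (Algebra.subset_adjoin ⟨φ, rfl⟩)
  · obtain ⟨v, hv⟩ : ∃ v, φ v ≠ 0 := by
      by_contra! hcon
      exact hφ (LinearMap.ext hcon)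
    exact ⟨v - a, by simpa using hv⟩

theorem Gen.forall_finite [Infinite K] {ι : Type*} {S : Set ι} (hS : S.Finite)
    {P : ι → V → Prop} (h : ∀ i ∈ S, Gen K (P i)) : Gen K (fun x => ∀ i ∈ S, P i x) := by
  induction S, hS using Set.Finite.induction_on with
  | empty => exact Gen.of_forall (by simp)
  | insert _ _ ih =>
    refine ((h _ (Set.mem_insert _ _)).and
      (ih fun i hi => h i (Set.mem_insert_of_mem _ hi))).mono ?_
    rintro x ⟨h1, h2⟩ i (rfl | hi)
    · exact h1
    · exact h2 i hi

/-- Families of linear maps depending polynomially on a parameter. -/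
def PolyFam (K : Type*) {X V W : Type*} [Field K] [AddCommGroup X] [Module K X]
    [AddCommGroup V] [Module K V] [AddCommGroup W] [Module K W] (M : X → V →ₗ[K] W) : Prop :=
  ∀ (v : V) (φ : W →ₗ[K] K), (fun x => φ (M x v)) ∈ polyFuns K X

variable {X E W : Type*} [AddCommGroup X] [Module K X]
  [AddCommGroup E] [Module K E] [AddCommGroup W] [Module K W]

theorem PolyFam.const (M : V →ₗ[K] W) : PolyFam K (fun _ : X => M) := fun v φ =>
  Subalgebra.algebraMap_mem (polyFuns K X) (φ (M v))

theorem PolyFam.comp [FiniteDimensional K E] {A : X → E →ₗ[K] W} {C : X → V →ₗ[K] E}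
    (hA : PolyFam K A) (hC : PolyFam K C) : PolyFam K (fun x => A x ∘ₗ C x) := by
  intro v φ
  let b := Module.finBasis K E
  have h1 : (fun x => φ ((A x ∘ₗ C x) v)) =
      ∑ i, (fun x => b.coord i (C x v)) * (fun x => φ (A x (b i))) := by
    funext x
    conv_lhs => rw [LinearMap.comp_apply, ← b.sum_repr (C x v), map_sum, map_sum]
    simp
  rw [h1]
  exact sum_mem fun i _ => mul_mem (hC _ _) (hA _ _)

theorem PolyFam.coprod {A : X → E →ₗ[K] W} {B : X → V →ₗ[K] W}
    (hA : PolyFam K A) (hB : PolyFam K B) : PolyFam K (fun x => (A x).coprod (B x)) := by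
  intro v φ
  have h1 : (fun x => φ ((A x).coprod (B x) v)) =
      (fun x => φ (A x v.1)) + (fun x => φ (B x v.2)) := by
    funext x; simp
  rw [h1]
  exact add_mem (hA _ _) (hB _ _)

theorem PolyFam.gen_rank [FiniteDimensional K W] {M : X → V →ₗ[K] W}
    (hM : PolyFam K M) :
    ∃ c, Gen K (fun x => Module.finrank K (LinearMap.range (M x)) = c) := by
  classical
  obtain ⟨x0, hx0⟩ : ∃ x0, ∀ x, Module.finrank K (LinearMap.range (M x)) ≤
      Module.finrank K (LinearMap.range (M x0)) := by
    have hbdd : BddAbove (Set.range fun x => Module.finrank K (LinearMap.range (M x))) :=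
      ⟨Module.finrank K W, by rintro _ ⟨x, rfl⟩; exact Submodule.finrank_le _⟩
    obtain ⟨x0, h⟩ := Nat.sSup_mem (Set.range_nonempty _) hbdd
    exact ⟨x0, fun x => by
      have := le_csSup hbdd ⟨x, rfl⟩
      rw [← h] at this; exact this⟩
  set ρ := Module.finrank K (LinearMap.range (M x0)) with hρ
  refine ⟨ρ, ?_⟩
  let b : Module.Basis (Fin ρ) K (LinearMap.range (M x0)) := Module.finBasis K _
  have hv : ∀ i, ∃ v, M x0 v = b i := fun i => (b i).2
  choose v hv using hv
  have hφ : ∀ i, ∃ φ : W →ₗ[K] K, φ ∘ₗ (LinearMap.range (M x0)).subtype = b.coord i :=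
    fun i => LinearMap.exists_extend _
  choose φ hφ using hφ
  let N : X → Matrix (Fin ρ) (Fin ρ) K := fun x => Matrix.of fun i j => φ i (M x (v j))
  refine ⟨fun x => (N x).det, ?_, ⟨x0, ?_⟩, fun x hx => ?_⟩
  · have : (fun x => (N x).det) = ∑ σ : Equiv.Perm (Fin ρ), (Equiv.Perm.sign σ : ℤ) •
        ∏ i, (fun x => φ (σ i) (M x (v i))) := by
      funext x
      rw [Matrix.det_apply]
      simp [N, Finset.sum_apply, Units.smul_def]
    rw [this]
    exact sum_mem fun σ _ => zsmul_mem (prod_mem fun i _ => hM _ _) _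
  · have : N x0 = 1 := by
      ext i j
      have := LinearMap.congr_fun (hφ i) (b j)
      simp only [LinearMap.comp_apply, Submodule.subtype_apply] at this
      simp [N, hv, this, Matrix.one_apply, Finsupp.single_apply, eq_comm]
    simp [this]
  · refine le_antisymm (hx0 x) ?_
    have hli : LinearIndependent K (fun j => M x (v j)) := by
      rw [Fintype.linearIndependent_iff]
      intro g hg
      have h1 : (N x).mulVec g = 0 := by
        funext i
        have := congrArg (φ i) hg
        simpa [N, Matrix.mulVec, dotProduct, mul_comm] using this
      have := Matrix.eq_zero_of_mulVec_eq_zero hx h1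
      intro i; rw [this]; rfl
    have hli2 : LinearIndependent K
        (fun j => (⟨M x (v j), v j, rfl⟩ : LinearMap.range (M x))) :=
      LinearIndependent.of_comp (LinearMap.range (M x)).subtype hli
    simpa using hli2.fintype_card_le_finrank

theorem finrank_comap_range [FiniteDimensional K E] [FiniteDimensional K W]
    (A : E →ₗ[K] W) (B : V →ₗ[K] W) :
    Module.finrank K ((LinearMap.range B).comap A) +
      Module.finrank K (LinearMap.range (A.coprod B)) =
      Module.finrank K E + Module.finrank K (LinearMap.range B) := by
  let q := (LinearMap.range B).mkQ
  have h1 := LinearMap.finrank_range_add_finrank_ker (q ∘ₗ A)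
  have h2 : LinearMap.ker (q ∘ₗ A) = (LinearMap.range B).comap A := by
    rw [LinearMap.ker_comp, Submodule.ker_mkQ]
  have h3 : LinearMap.range (q ∘ₗ A) = (LinearMap.range (A.coprod B)).map q := by
    rw [LinearMap.range_comp, LinearMap.range_coprod, Submodule.map_sup]
    have : (LinearMap.range B).map q = ⊥ := by
      rw [eq_bot_iff, Submodule.map_le_iff_le_comap]
      intro w hw
      simpa [q] using hw
    rw [this, sup_bot_eq]
  have h4 := LinearMap.finrank_range_add_finrank_ker
    (q ∘ₗ (LinearMap.range (A.coprod B)).subtype)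
  have h5 : LinearMap.range (q ∘ₗ (LinearMap.range (A.coprod B)).subtype) =
      (LinearMap.range (A.coprod B)).map q := by
    rw [LinearMap.range_comp, Submodule.range_subtype]
  have h6 : Module.finrank K (LinearMap.ker (q ∘ₗ (LinearMap.range (A.coprod B)).subtype)) =
      Module.finrank K (LinearMap.range B) := by
    rw [LinearMap.ker_comp, Submodule.ker_mkQ]
    apply LinearEquiv.finrank_eq
    apply Submodule.comapSubtypeEquivOfLe
    rw [LinearMap.range_coprod]
    exact le_sup_right
  rw [h2, h3] at h1
  rw [h5, h6] at h4
  omega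

end GenericHelpers

/-- Families of subspaces `(A x)⁻¹ (range (B x))` with `A`, `B` polynomial. -/
def PolyRep.{u} (K : Type*) {X : Type*} {E : Type u} [Field K] [AddCommGroup X] [Module K X]
    [AddCommGroup E] [Module K E] (S : X → Submodule K E) : Prop :=
  ∃ (V W : Type u) (_ : AddCommGroup V) (_ : Module K V) (_ : AddCommGroup W) (_ : Module K W)
    (_ : FiniteDimensional K W)
    (A : X → E →ₗ[K] W) (B : X → V →ₗ[K] W), PolyFam K A ∧ PolyFam K B ∧
    ∀ x, S x = (LinearMap.range (B x)).comap (A x)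

section RepHelpers
universe u
variable {K : Type*} {X : Type*} {E E' : Type u} [Field K] [AddCommGroup X] [Module K X]
    [AddCommGroup E] [Module K E] [AddCommGroup E'] [Module K E']

theorem PolyRep.gen_finrank [Infinite K] [FiniteDimensional K E] {S : X → Submodule K E}
    (h : PolyRep K S) : ∃ c, Gen K (fun x => Module.finrank K (S x) = c) := by
  obtain ⟨V, W, _, _, _, _, _, A, B, hA, hB, h⟩ := h
  obtain ⟨c1, h1⟩ := hB.gen_rank
  obtain ⟨c2, h2⟩ := (hA.coprod hB).gen_rank
  refine ⟨Module.finrank K E + c1 - c2, (h1.and h2).mono ?_⟩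
  rintro x ⟨h1, h2⟩
  have := finrank_comap_range (A x) (B x)
  rw [h x]
  omega

theorem PolyRep.bot [FiniteDimensional K E] : PolyRep K (fun _ : X => (⊥ : Submodule K E)) :=
  ⟨PUnit, E, inferInstance, inferInstance, inferInstance, inferInstance, inferInstance,
    fun _ => LinearMap.id, fun _ => 0, PolyFam.const _, PolyFam.const _, fun x => by simp⟩

theorem PolyRep.comap [FiniteDimensional K E] {S : X → Submodule K E} (h : PolyRep K S)
    {C : X → E' →ₗ[K] E} (hC : PolyFam K C) : PolyRep K (fun x => (S x).comap (C x)) := by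
  obtain ⟨V, W, _, _, _, _, _, A, B, hA, hB, h⟩ := h
  exact ⟨V, W, inferInstance, inferInstance, inferInstance, inferInstance, inferInstance,
    fun x => A x ∘ₗ C x, B, hA.comp hC, hB, fun x => by simp only [h x, Submodule.comap_comp]⟩

theorem PolyRep.sup_range [FiniteDimensional K E] {S : X → Submodule K E} (h : PolyRep K S)
    {C : X → E' →ₗ[K] E} (hC : PolyFam K C) :
    PolyRep K (fun x => S x ⊔ LinearMap.range (C x)) := by
  obtain ⟨V, W, _, _, _, _, _, A, B, hA, hB, h⟩ := h
  refine ⟨V × E', W, inferInstance, inferInstance, inferInstance, inferInstance, inferInstance,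
    A, fun x => (B x).coprod (A x ∘ₗ C x), hA, hB.coprod (hA.comp hC), fun x => ?_⟩
  simp only [h x]
  ext f
  simp only [Submodule.mem_sup, Submodule.mem_comap, LinearMap.mem_range, Prod.exists,
    LinearMap.coprod_apply, LinearMap.comp_apply]
  constructor
  · rintro ⟨y, ⟨v, hv⟩, z, ⟨e, rfl⟩, rfl⟩
    exact ⟨v, e, by rw [hv, map_add]⟩
  · rintro ⟨v, e, hve⟩
    exact ⟨f - C x e, ⟨v, by rw [map_sub, ← hve, add_sub_cancel_right]⟩, C x e, ⟨e, rfl⟩, by simp⟩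

end RepHelpers

section WordHelpers

set_option linter.unusedSectionVars false

theorem wordIdealAux_snoc {R : Type*} [CommRing R] (l : ℕ → R) (o : List Bool) (a : Bool) :
    ∀ (j : ℕ) (I : Ideal R), wordIdealAux l j I (o ++ [a]) =
      if a then (wordIdealAux l j I o).colon (Ideal.span {l (j + o.length)})
        else wordIdealAux l j I o ⊔ Ideal.span {l (j + o.length)} := by
  induction o with
  | nil => intro j I; simp [wordIdealAux]
  | cons b o ih =>
    intro j I
    rw [List.cons_append, wordIdealAux, ih, wordIdealAux, List.length_cons]
    rw [show j + 1 + o.length = j + (o.length + 1) by omega]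

theorem wordIdeal_snoc_c {R : Type*} [CommRing R] (l : ℕ → R) (o : List Bool) :
    wordIdeal l (o ++ [true]) = (wordIdeal l o).colon (Ideal.span {l o.length}) := by
  simpa [wordIdeal] using wordIdealAux_snoc l o true 0 ⊥

theorem wordIdeal_snoc_s {R : Type*} [CommRing R] (l : ℕ → R) (o : List Bool) :
    wordIdeal l (o ++ [false]) = wordIdeal l o ⊔ Ideal.span {l o.length} := by
  simpa [wordIdeal] using wordIdealAux_snoc l o false 0 ⊥

theorem wordIdeal_congr {R : Type*} [CommRing R] (l l' : ℕ → R) (o : List Bool)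
    (h : ∀ t < o.length, l t = l' t) : wordIdeal l o = wordIdeal l' o := by
  induction o using List.reverseRecOn with
  | nil => rfl
  | append_singleton o a ih =>
    have h1 := ih fun t ht => h t (by simp; omega)
    have h2 := h o.length (by simp)
    cases a
    · rw [wordIdeal_snoc_s, wordIdeal_snoc_s, h1, h2]
    · rw [wordIdeal_snoc_c, wordIdeal_snoc_c, h1, h2]

variable {K R : Type*} [Field K] [CommRing R] [Algebra K R]
    (𝒜 : ℕ → Submodule K R) [GradedAlgebra 𝒜]

/-- Multiplication by a linear form. -/
def mulMap (e : ℕ) : 𝒜 1 →ₗ[K] 𝒜 e →ₗ[K] 𝒜 (e + 1) :=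
  LinearMap.mk₂ K
    (fun p f => ⟨p * f, by
      have := SetLike.mul_mem_graded p.2 f.2
      rwa [add_comm] at this⟩)
    (fun _ _ _ => Subtype.ext (by simp [add_mul]))
    (fun _ _ _ => Subtype.ext (by simp))
    (fun _ _ _ => Subtype.ext (by simp [mul_add]))
    (fun _ _ _ => Subtype.ext (by simp))

@[simp] theorem mulMap_coe (e : ℕ) (p : 𝒜 1) (f : 𝒜 e) :
    ((mulMap 𝒜 e p f : 𝒜 (e + 1)) : R) = p * f := rfl

theorem mem_homComp {I : Ideal R} {e : ℕ} {f : 𝒜 e} : f ∈ homComp 𝒜 I e ↔ (f : R) ∈ I :=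
  Iff.rfl

theorem isHomogeneous_colon {I : Ideal R} (hI : I.IsHomogeneous 𝒜) (p : 𝒜 1) :
    (I.colon (Ideal.span {(p : R)})).IsHomogeneous 𝒜 := by
  intro i f hf
  rw [Ideal.mem_colon_span_singleton] at hf ⊢
  have h := hI (1 + i) hf
  rw [mul_comm, DirectSum.coe_decompose_mul_add_of_left_mem 𝒜 p.2] at h
  rwa [mul_comm]

theorem isHomogeneous_sup {I : Ideal R} (hI : I.IsHomogeneous 𝒜) (p : 𝒜 1) :
    (I ⊔ Ideal.span {(p : R)}).IsHomogeneous 𝒜 := by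
  refine Ideal.IsHomogeneous.sup hI (Ideal.homogeneous_span 𝒜 _ ?_)
  rintro _ rfl
  exact ⟨1, p.2⟩

theorem isHomogeneous_wordIdeal (l : ℕ → 𝒜 1) (o : List Bool) :
    (wordIdeal (fun t => (l t : R)) o).IsHomogeneous 𝒜 := by
  induction o using List.reverseRecOn with
  | nil => exact Ideal.IsHomogeneous.bot 𝒜
  | append_singleton o a ih =>
    cases a
    · rw [wordIdeal_snoc_s]; exact isHomogeneous_sup 𝒜 ih _
    · rw [wordIdeal_snoc_c]; exact isHomogeneous_colon 𝒜 ih _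

theorem homComp_colon (I : Ideal R) (p : 𝒜 1) (e : ℕ) :
    homComp 𝒜 (I.colon (Ideal.span {(p : R)})) e =
      (homComp 𝒜 I (e + 1)).comap (mulMap 𝒜 e p) := by
  ext f
  rw [Submodule.mem_comap, mem_homComp, mem_homComp, Ideal.mem_colon_span_singleton,
    mulMap_coe, mul_comm]

theorem homComp_sup_succ {I : Ideal R} (hI : I.IsHomogeneous 𝒜) (p : 𝒜 1) (e : ℕ) :
    homComp 𝒜 (I ⊔ Ideal.span {(p : R)}) (e + 1) =
      homComp 𝒜 I (e + 1) ⊔ LinearMap.range (mulMap 𝒜 e p) := by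
  apply le_antisymm
  · intro f hf
    rw [mem_homComp, sup_comm] at hf
    replace hf := Ideal.mem_span_singleton_sup.1 hf
    obtain ⟨b, a, ha, hab⟩ := hf
    have h := hI (1 + e) ha
    have h2 : a = (f : R) - (p : R) * b := by
      rw [← hab, mul_comm (p : R) b, add_sub_cancel_left]
    rw [h2, DirectSum.decompose_sub, DirectSum.sub_apply, AddSubgroupClass.coe_sub,
      DirectSum.coe_decompose_mul_add_of_left_mem 𝒜 p.2, add_comm,
      DirectSum.decompose_of_mem_same 𝒜 f.2] at h
    refine Submodule.mem_sup.2 ⟨f - mulMap 𝒜 e p (DirectSum.decompose 𝒜 b e), ?_, _,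
      ⟨DirectSum.decompose 𝒜 b e, rfl⟩, by simp⟩
    rw [mem_homComp]
    simpa using h
  · refine sup_le (fun f hf => Ideal.mem_sup_left hf) ?_
    rintro _ ⟨g, rfl⟩
    rw [mem_homComp, mulMap_coe]
    exact Ideal.mem_sup_right (Ideal.mul_mem_right _ _ (Ideal.mem_span_singleton_self _))

theorem homComp_sup_zero {I : Ideal R} (hI : I.IsHomogeneous 𝒜) (p : 𝒜 1) :
    homComp 𝒜 (I ⊔ Ideal.span {(p : R)}) 0 = homComp 𝒜 I 0 := by
  apply le_antisymm
  · intro f hf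
    rw [mem_homComp, sup_comm] at hf
    replace hf := Ideal.mem_span_singleton_sup.1 hf
    obtain ⟨b, a, ha, hab⟩ := hf
    have h := hI 0 ha
    have h2 : a = (f : R) - (p : R) * b := by
      rw [← hab, mul_comm (p : R) b, add_sub_cancel_left]
    rw [h2, DirectSum.decompose_sub, DirectSum.sub_apply, AddSubgroupClass.coe_sub,
      DirectSum.coe_decompose_mul_of_left_mem_of_not_le 𝒜 p.2 (by omega),
      DirectSum.decompose_of_mem_same 𝒜 f.2, sub_zero] at h
    exact h
  · exact fun f hf => Ideal.mem_sup_left hf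

theorem finiteDimensional_comp (h0 : 𝒜 0 = (1 : Submodule K R))
    (hstd : ∀ n, 𝒜 (n + 1) = 𝒜 1 * 𝒜 n) [FiniteDimensional K (𝒜 1)] (e : ℕ) :
    FiniteDimensional K (𝒜 e) := by
  rw [FiniteDimensional, Module.Finite.iff_fg]
  induction e with
  | zero =>
    rw [h0, Submodule.one_eq_span]
    exact Submodule.fg_span_singleton _
  | succ n ih =>
    rw [hstd]
    exact Submodule.FG.mul (Module.Finite.iff_fg.1 inferInstance) ih

theorem irrelevant_le_of_one (hstd : ∀ n, 𝒜 (n + 1) = 𝒜 1 * 𝒜 n) {I : Ideal R}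
    (h : ∀ f ∈ 𝒜 1, f ∈ I) : (HomogeneousIdeal.irrelevant 𝒜).toIdeal ≤ I := by
  rw [HomogeneousIdeal.toIdeal_irrelevant_le]
  intro i hi x hx
  obtain ⟨n, rfl⟩ : ∃ n, i = n + 1 := ⟨i - 1, by omega⟩
  have hx' : x ∈ 𝒜 (n + 1) := hx
  rw [hstd] at hx'
  have hle : 𝒜 1 * 𝒜 n ≤ Submodule.restrictScalars K I := by
    rw [Submodule.mul_le]
    intro a ha b _
    exact Ideal.mul_mem_right _ _ (h a ha)
  exact hle hx'

variable [hfin : ∀ e, FiniteDimensional K (𝒜 e)]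
  {X : Type*} [AddCommGroup X] [Module K X]

theorem homDim_mono {I J : Ideal R} (h : I ≤ J) (e : ℕ) : homDim 𝒜 I e ≤ homDim 𝒜 J e :=
  Submodule.finrank_mono (fun _ hf => h hf)

theorem homDim_eq_top {I : Ideal R} (h : Module.finrank K (𝒜 1) ≤ homDim 𝒜 I 1) :
    ∀ f ∈ 𝒜 1, f ∈ I := by
  have := Submodule.eq_top_of_finrank_eq
    (le_antisymm (Submodule.finrank_le (homComp 𝒜 I 1)) h)
  intro f hf
  have h2 : (⟨f, hf⟩ : 𝒜 1) ∈ homComp 𝒜 I 1 := by rw [this]; trivial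
  exact h2

theorem homDim_lt_sup {I : Ideal R} (p : 𝒜 1) (hp : (p : R) ∉ I) :
    homDim 𝒜 I 1 < homDim 𝒜 (I ⊔ Ideal.span {(p : R)}) 1 := by
  apply Submodule.finrank_lt_finrank_of_lt
  refine lt_of_le_of_ne (fun _ hf => Ideal.mem_sup_left hf) fun heq => hp ?_
  have : p ∈ homComp 𝒜 (I ⊔ Ideal.span {(p : R)}) 1 :=
    Ideal.mem_sup_right (Ideal.mem_span_singleton_self _)
  rw [← heq] at this
  exact this

theorem polyFam_mulMap (l : X →ₗ[K] 𝒜 1) (e : ℕ) : PolyFam K (fun x => mulMap 𝒜 e (l x)) := by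
  intro v φ
  exact Algebra.subset_adjoin ⟨φ ∘ₗ (mulMap 𝒜 e).flip v ∘ₗ l, rfl⟩

theorem polyRep_wordIdeal (l : ℕ → X →ₗ[K] 𝒜 1) (o : List Bool) : ∀ e,
    PolyRep K (fun x => homComp 𝒜 (wordIdeal (fun t => (l t x : R)) o) e) := by
  induction o using List.reverseRecOn with
  | nil =>
    intro e
    have : (fun x : X => homComp 𝒜 (wordIdeal (fun t => (l t x : R)) []) e) =
        fun _ => ⊥ := by
      funext x
      ext f
      rw [mem_homComp]
      simp [wordIdeal, wordIdealAux]
    rw [this]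
    exact PolyRep.bot
  | append_singleton o a ih =>
    intro e
    cases a
    · simp only [wordIdeal_snoc_s]
      cases e with
      | zero =>
        have := ih 0
        simpa only [homComp_sup_zero 𝒜 (isHomogeneous_wordIdeal 𝒜 (fun t => l t _) o)] using this
      | succ e =>
        have := (ih (e + 1)).sup_range (polyFam_mulMap 𝒜 (l o.length) e)
        simpa only [homComp_sup_succ 𝒜 (isHomogeneous_wordIdeal 𝒜 (fun t => l t _) o)] using this
    · simp only [wordIdeal_snoc_c, homComp_colon]
      exact (ih (e + 1)).comap (polyFam_mulMap 𝒜 (l o.length) e)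

theorem gen_homDim [Infinite K] (l : ℕ → X →ₗ[K] 𝒜 1) (o : List Bool) (e : ℕ) :
    ∃ c, Gen K (fun x => homDim 𝒜 (wordIdeal (fun t => (l t x : R)) o) e = c) :=
  (polyRep_wordIdeal 𝒜 l o e).gen_finrank

/-- The sequence of forms attached to a tuple, as a sequence of linear maps. -/
def formSeq (r : ℕ) (t : ℕ) : (Fin r → 𝒜 1) →ₗ[K] 𝒜 1 :=
  if h : t < r then LinearMap.proj ⟨t, h⟩ else 0

theorem formSeq_apply {r t : ℕ} (h : t < r) (x : Fin r → 𝒜 1) :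
    formSeq 𝒜 r t x = x ⟨t, h⟩ := by simp [formSeq, h]

theorem formSeq_eq (r : ℕ) (x : Fin r → 𝒜 1) :
    (fun t => if h : t < r then (x ⟨t, h⟩ : R) else 0) = fun t => (formSeq 𝒜 r t x : R) := by
  funext t
  by_cases h : t < r <;> simp [formSeq, h]

theorem gen_prop_one [Infinite K] (hstd : ∀ n, 𝒜 (n + 1) = 𝒜 1 * 𝒜 n) (r : ℕ)
    (o : List Bool) (ho : o.length < r) :
    Gen K (fun x : Fin r → 𝒜 1 =>
      ¬ (HomogeneousIdeal.irrelevant 𝒜).toIdeal ≤ wordIdeal (fun t => (formSeq 𝒜 r t x : R)) o →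
      (formSeq 𝒜 r o.length x : R) ∉ wordIdeal (fun t => (formSeq 𝒜 r t x : R)) o) := by
  classical
  obtain ⟨c1, h1⟩ := gen_homDim 𝒜 (formSeq 𝒜 r) o 1
  obtain ⟨c2, h2⟩ := gen_homDim 𝒜 (formSeq 𝒜 r) (o ++ [false]) 1
  by_cases hc : Module.finrank K (𝒜 1) ≤ c1
  · refine h1.mono fun x hx hm => absurd ?_ hm
    exact irrelevant_le_of_one 𝒜 hstd (homDim_eq_top 𝒜 (hx ▸ hc))
  have hlt : c1 < c2 := by
    let i : Fin r := ⟨o.length, ho⟩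
    obtain ⟨x, hx⟩ := (h1.and h2).exists_translate (LinearMap.single K (fun _ => 𝒜 1) i)
    have hI : ∀ y, wordIdeal (fun t => (formSeq 𝒜 r t
        (x + LinearMap.single K (fun _ => 𝒜 1) i y) : R)) o =
        wordIdeal (fun t => (formSeq 𝒜 r t x : R)) o := by
      intro y
      apply wordIdeal_congr
      intro t ht
      have htr : t < r := by omega
      have hne : (⟨t, htr⟩ : Fin r) ≠ i := by
        intro h
        have := congrArg Fin.val h
        simp [i] at this
        omega
      simp [formSeq_apply 𝒜 htr, hne]
    have hS : homComp 𝒜 (wordIdeal (fun t => (formSeq 𝒜 r t x : R)) o) 1 ≠ ⊤ := by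
      intro htop
      obtain ⟨y, hy, _⟩ := hx.exists
      rw [hI, homDim, htop, finrank_top] at hy
      omega
    obtain ⟨y, ⟨hy1, hy2⟩, hy⟩ := (hx.and (Gen.not_mem _ hS (x i))).exists
    rw [mem_homComp, ← hI y] at hy
    have hval : formSeq 𝒜 r o.length (x + LinearMap.single K (fun _ => 𝒜 1) i y) = x i + y := by
      rw [formSeq_apply 𝒜 ho]
      simp [i]
    rw [← hval] at hy
    have := homDim_lt_sup 𝒜 _ hy
    rw [wordIdeal_snoc_s] at hy2
    omega
  refine (h1.and h2).mono ?_
  rintro x ⟨hx1, hx2⟩ _ hmem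
  rw [wordIdeal_snoc_s, sup_eq_left.2 ((Ideal.span_singleton_le_iff_mem _).2 hmem)] at hx2
  omega

theorem prop_two (r : ℕ) (l : ℕ → 𝒜 1)
    (h : ∀ o : List Bool, o.length < r →
      ¬ (HomogeneousIdeal.irrelevant 𝒜).toIdeal ≤ wordIdeal (fun t => (l t : R)) o →
      (l o.length : R) ∉ wordIdeal (fun t => (l t : R)) o) (o : List Bool) :
    o.length ≤ r → (HomogeneousIdeal.irrelevant 𝒜).toIdeal ≤ wordIdeal (fun t => (l t : R)) o ∨
      o.count false ≤ homDim 𝒜 (wordIdeal (fun t => (l t : R)) o) 1 := by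
  induction o using List.reverseRecOn with
  | nil => intro _; right; simp
  | append_singleton o a ih =>
    intro ho
    simp only [List.length_append, List.length_singleton] at ho
    have hle : wordIdeal (fun t => (l t : R)) o ≤ wordIdeal (fun t => (l t : R)) (o ++ [a]) := by
      cases a
      · rw [wordIdeal_snoc_s]; exact le_sup_left
      · rw [wordIdeal_snoc_c]
        intro f hf
        rw [Ideal.mem_colon_span_singleton]
        exact Ideal.mul_mem_right _ _ hf
    by_cases hm : (HomogeneousIdeal.irrelevant 𝒜).toIdeal ≤ wordIdeal (fun t => (l t : R)) o
    · exact Or.inl (hm.trans hle)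
    right
    have h1 := (ih (by omega)).resolve_left hm
    cases a
    · have h2 := homDim_lt_sup 𝒜 _ (h o (by omega) hm)
      rw [wordIdeal_snoc_s]
      simp only [List.count_append, List.count_singleton_self]
      omega
    · have := homDim_mono 𝒜 hle 1
      simp only [List.count_append]
      simp
      omega

theorem gen_prop_three [Infinite K] (r : ℕ) (o : List Bool) (ho : o.length + 2 ≤ r) (e : ℕ) :
    Gen K (fun x : Fin r → 𝒜 1 =>
      homDim 𝒜 (wordIdeal (fun t => (formSeq 𝒜 r t x : R)) (o ++ [true, false])) e ≤
      homDim 𝒜 (wordIdeal (fun t => (formSeq 𝒜 r t x : R)) (o ++ [false, true])) e) := by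
  classical
  obtain ⟨c1, h1⟩ := gen_homDim 𝒜 (formSeq 𝒜 r) (o ++ [true, false]) e
  obtain ⟨c2, h2⟩ := gen_homDim 𝒜 (formSeq 𝒜 r) (o ++ [false, true]) e
  let i : Fin r := ⟨o.length, by omega⟩
  let j : Fin r := ⟨o.length + 1, by omega⟩
  let σ : (Fin r → 𝒜 1) →ₗ[K] (Fin r → 𝒜 1) := LinearMap.funLeft K (𝒜 1) (Equiv.swap i j)
  have hσ : Function.Surjective σ :=
    LinearMap.funLeft_surjective_of_injective _ _ _ (Equiv.injective _)
  obtain ⟨x, hx1, hx2⟩ := (h1.and (h2.comp_surj σ hσ)).exists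
  have hle : c1 ≤ c2 := by
    rw [← hx1, ← hx2]
    apply homDim_mono
    have e1 : o ++ [true, false] = (o ++ [true]) ++ [false] := by simp
    have e2 : o ++ [false, true] = (o ++ [false]) ++ [true] := by simp
    rw [e1, e2, wordIdeal_snoc_s, wordIdeal_snoc_c, wordIdeal_snoc_c, wordIdeal_snoc_s]
    have hI : wordIdeal (fun t => (formSeq 𝒜 r t (σ x) : R)) o =
        wordIdeal (fun t => (formSeq 𝒜 r t x : R)) o := by
      apply wordIdeal_congr
      intro t ht
      have htr : t < r := by omega
      have hne : (⟨t, htr⟩ : Fin r) ≠ i := by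
        intro h
        have := congrArg Fin.val h
        simp [i] at this
        omega
      have hne' : (⟨t, htr⟩ : Fin r) ≠ j := by
        intro h
        have := congrArg Fin.val h
        simp [j] at this
        omega
      simp [formSeq_apply 𝒜 htr, σ, LinearMap.funLeft_apply, Equiv.swap_apply_of_ne_of_ne hne hne']
    have hp : formSeq 𝒜 r o.length (σ x) = x j := by
      rw [formSeq_apply 𝒜 i.2]
      change x (Equiv.swap i j i) = x j
      rw [Equiv.swap_apply_left]
    have hq : formSeq 𝒜 r (o.length + 1) (σ x) = x i := by
      rw [formSeq_apply 𝒜 j.2]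
      change x (Equiv.swap i j j) = x i
      rw [Equiv.swap_apply_right]
    have hp' : formSeq 𝒜 r o.length x = x i := formSeq_apply 𝒜 i.2 x
    have hq' : formSeq 𝒜 r (o.length + 1) x = x j := formSeq_apply 𝒜 j.2 x
    simp only [List.length_append, List.length_singleton]
    rw [hI, hp, hq, hp', hq']
    refine sup_le ?_ ?_
    · intro f hf
      rw [Ideal.mem_colon_span_singleton] at hf ⊢
      exact Ideal.mem_sup_left hf
    · rw [Ideal.span_singleton_le_iff_mem, Ideal.mem_colon_span_singleton]
      exact Ideal.mem_sup_right (Ideal.mul_mem_right _ _ (Ideal.mem_span_singleton_self _))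
  refine (h1.and h2).mono ?_
  rintro x ⟨hx1, hx2⟩
  rw [hx1, hx2]
  exact hle

end WordHelpers

/-- For a standard graded algebra `R` over an infinite field `K`, `d > 0` and
`r ≥ d + n - 1` (`n = dim_K R_1`), `r` general linear forms of `R` satisfy property
(Gr,d): there is a nonempty Zariski open `U ⊆ 𝔸(R_1)^r` all of whose tuples satisfy
(Gr,d). -/
theorem general_linear_forms_satisfy_Gr
    {K R : Type*} [Field K] [Infinite K] [CommRing R] [Algebra K R]
    (𝒜 : ℕ → Submodule K R) [GradedAlgebra 𝒜]
    (h0 : 𝒜 0 = (1 : Submodule K R)) (hstd : ∀ n, 𝒜 (n + 1) = 𝒜 1 * 𝒜 n)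
    [FiniteDimensional K (𝒜 1)] (d r : ℕ) (hd : 0 < d)
    (hr : Module.finrank K (𝒜 1) + d ≤ r + 1) :
    ∃ U : Set (Fin r → 𝒜 1), IsZOpen K U ∧ U.Nonempty ∧
      ∀ x ∈ U, GrProp 𝒜 (fun t => if h : t < r then (x ⟨t, h⟩ : R) else 0) r d := by
  classical
  have hfin : ∀ e, FiniteDimensional K (𝒜 e) := finiteDimensional_comp 𝒜 h0 hstd
  have hgen : Gen K (fun x : Fin r → 𝒜 1 => ∀ o ∈ {o : List Bool | o.length ≤ r},
      (o.length < r →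
        ¬ (HomogeneousIdeal.irrelevant 𝒜).toIdeal ≤
          wordIdeal (fun t => (formSeq 𝒜 r t x : R)) o →
        (formSeq 𝒜 r o.length x : R) ∉ wordIdeal (fun t => (formSeq 𝒜 r t x : R)) o) ∧
      (o.length + 2 ≤ r →
        homDim 𝒜 (wordIdeal (fun t => (formSeq 𝒜 r t x : R)) (o ++ [true, false]))
          (d - o.count true - 1) ≤
        homDim 𝒜 (wordIdeal (fun t => (formSeq 𝒜 r t x : R)) (o ++ [false, true]))
          (d - o.count true - 1))) := by
    refine Gen.forall_finite (List.finite_length_le Bool r) fun o _ => Gen.and ?_ ?_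
    · by_cases h : o.length < r
      · exact (gen_prop_one 𝒜 hstd r o h).mono fun x hx _ => hx
      · exact Gen.of_forall fun x hx => absurd hx h
    · by_cases h : o.length + 2 ≤ r
      · exact (gen_prop_three 𝒜 r o h _).mono fun x hx _ => hx
      · exact Gen.of_forall fun x hx => absurd hx h
  obtain ⟨f, hf, hne, hgen⟩ := hgen
  refine ⟨{x | f x ≠ 0}, ⟨{f}, by simpa using hf, ?_⟩, hne, fun x hx => ?_⟩
  · ext x; simp
  rw [formSeq_eq]
  have hx := hgen x hx
  intro o ho
  refine ⟨fun h1 h2 => (hx o ho).1 h2 h1, fun hlen hct => ?_, (hx o ho).2⟩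
  rcases prop_two 𝒜 r (fun t => formSeq 𝒜 r t x)
    (fun o ho => (hx o ho.le).1 ho) o ho with h | h
  · exact h
  · refine irrelevant_le_of_one 𝒜 hstd (homDim_eq_top 𝒜 (le_trans ?_ h))
    have := List.count_true_add_count_false o
    omega
end
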